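/- The left-leg crossed intertwiner leleR: TD[n] → TBFFR[n] is strictly equivariant for the 𝔰𝔬(n,ℤ)-actions by crossed intertwiners on both sides; explicitly, for every B ∈ 𝔰𝔬(n,ℤ): (i) id_{ℝⁿ} ∘ φ = φ ∘ φ_{e^B}, i.e. the ℝⁿ-component of φ_{e^B}(a⊕â) is a; (ii) f_B ∘ f = f ∘ f_{e^B}, which pointwise reads s + m̂·c − ⟨m|B|c⟩ = s + (Bm + m̂)·c in 𝕋 for all m, m̂ ∈ ℤⁿ, s ∈ 𝕋, c ∈ 𝕋ⁿ; (iii) η_B(φ(x₁), φ(x₂)) + f_B(η(x₁,x₂)) = η(φ_{e^B}(x₁), φ_{e^B}(x₂)) + f(η_{e^B}(x₁,x₂)), which pointwise reads ⌊a₂|B|a₁⌋ + â₁·a₂ ≡ (Ba₁ + â₁)·a₂ + ⌊a₁|B|a₂⌋ mod ℤ for all a₁,â₁,a₂,â₂ ∈ ℝⁿ. -/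

import Mathlib

open Matrix

noncomputable section

/-- The additive circle `𝕋 := ℝ/ℤ`. -/
abbrev Torus : Type := AddCircle (1 : ℝ)

/-- `G = ℝ^{2n}` of `TD[n]`, written as pairs `a ⊕ â` with `a, â ∈ ℝⁿ`. -/
abbrev TDG (n : ℕ) : Type := (Fin n → ℝ) × (Fin n → ℝ)

/-- `H = ℤ^{2n} × 𝕋` of `TD[n]`. -/
abbrev TDH (n : ℕ) : Type := ((Fin n → ℤ) × (Fin n → ℤ)) × Torus

/-- The pairing `[x,y] := Σ_{i=1}^{n} x_{n+i} · y_i`. -/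
def TDpair {n : ℕ} (x y : TDG n) : ℝ := ∑ i, x.2 i * y.1 i

/-- `⌊v|B|w⌋ := Σ_{i>j} B_{ij} vᵢ wⱼ`. -/
def lbrak {n : ℕ} (B : Matrix (Fin n) (Fin n) ℤ) (v w : Fin n → ℝ) : ℝ :=
  ∑ i, ∑ j, if j < i then (B i j : ℝ) * v i * w j else 0

/-- The `𝔰𝔬(n,ℤ)`-action on `TD[n]`: `φ_{e^B}(a⊕â) := a ⊕ (Ba + â)`. -/
def eBφ {n : ℕ} (B : Matrix (Fin n) (Fin n) ℤ) (x : TDG n) : TDG n :=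
  (x.1, fun i => (∑ j, (B i j : ℝ) * x.1 j) + x.2 i)

/-- The `𝔰𝔬(n,ℤ)`-action on `TD[n]`: `f_{e^B}(m⊕m̂, s) := (m ⊕ (Bm + m̂), s)`. -/
def eBf {n : ℕ} (B : Matrix (Fin n) (Fin n) ℤ) (h : TDH n) : TDH n :=
  ((h.1.1, fun i => (∑ j, B i j * h.1.1 j) + h.1.2 i), h.2)

/-- The `𝔰𝔬(n,ℤ)`-action on `TD[n]`: `η_{e^B}(a⊕â, b⊕b̂) := (0, ⌊a|B|b⌋ mod ℤ)`. -/
def eBη {n : ℕ} (B : Matrix (Fin n) (Fin n) ℤ) (x x' : TDG n) : TDH n :=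
  ((0, 0), ((lbrak B x.1 x'.1 : ℝ) : Torus))

/-- Elements of `H'` of `TBFFR[n]`: pairs of a map `τ : 𝕋ⁿ → 𝕋` and `m ∈ ℤⁿ`. -/
abbrev TBH (n : ℕ) : Type := ((Fin n → Torus) → Torus) × (Fin n → ℤ)

/-- The well-defined map `⟨m|B|·⟩ : 𝕋ⁿ → 𝕋`, `c ↦ Σ_{i,j} B_{ij} mᵢ cⱼ`. -/
def braB {n : ℕ} (B : Matrix (Fin n) (Fin n) ℤ) (m : Fin n → ℤ) (c : Fin n → Torus) : Torus :=
  ∑ i, ∑ j, (B i j * m i) • c j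

/-- The `𝔰𝔬(n,ℤ)`-action on `TBFFR[n]`: `f_B(τ, m) := (τ − ⟨m|B|·⟩, m)`. -/
def fB {n : ℕ} (B : Matrix (Fin n) (Fin n) ℤ) (h : TBH n) : TBH n :=
  (fun c => h.1 c - braB B h.2 c, h.2)

/-- The `𝔰𝔬(n,ℤ)`-action on `TBFFR[n]`:
`η_B(a,a') := (the constant map with value ⌊a'|B|a⌋ mod ℤ, 0)`. -/
def ηB {n : ℕ} (B : Matrix (Fin n) (Fin n) ℤ) (a a' : Fin n → ℝ) : TBH n :=
  (fun _ => ((lbrak B a' a : ℝ) : Torus), 0)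

/-- `leleR`: `φ(a⊕â) := a`. -/
def leleRφ {n : ℕ} (x : TDG n) : Fin n → ℝ := x.1

/-- `leleR`: `f(m⊕m̂, s) := (τ_{s,m̂}, m)`, where `τ_{s,m̂}(c) := s + m̂·c`. -/
def leleRf {n : ℕ} (h : TDH n) : TBH n :=
  (fun c => h.2 + ∑ i, h.1.2 i • c i, h.1.1)

/-- `leleR`: `η(a₁⊕â₁, a₂⊕â₂) := (the constant map with value â₁·a₂ mod ℤ, 0)`. -/
def leleRη {n : ℕ} (x x' : TDG n) : TBH n :=
  (fun _ => ((TDpair x x' : ℝ) : Torus), 0)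

/-!
Write `L` for the strictly lower triangular part of a skew-symmetric `B`, so that `B = L - Lᵀ` and
`⌊v|B|w⌋ = v · Lw`. Hence `Bv · w = ⌊w|B|v⌋ - ⌊v|B|w⌋`: the asymmetry of the bracket is exactly the
change of the pairing `[x₁,x₂]` under `φ_{e^B}`, which is (iii). For (ii), skew-symmetry turns the
subtracted `⟨m|B|c⟩` into the added `(Bm) · c`.
-/

theorem vecMul_eq_neg_mulVec_of_transpose_eq_neg {ι R : Type*} [Fintype ι]
    [NonUnitalCommRing R] {B : Matrix ι ι R} (hB : Bᵀ = -B) (v : ι → R) :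
    v ᵥ* B = -(B *ᵥ v) := by
  rw [← mulVec_transpose, hB, neg_mulVec]

/-- The strictly lower triangular part of a square matrix; the bracket `⌊v|B|w⌋` is the bilinear
form it defines. -/
def strictLower {ι R : Type*} [LT ι] [DecidableLT ι] [Zero R] (B : Matrix ι ι R) : Matrix ι ι R :=
  of fun i j => if j < i then B i j else 0

theorem strictLower_sub_transpose_strictLower {ι R : Type*} [LinearOrder ι] [AddCommGroup R]
    [IsAddTorsionFree R] {B : Matrix ι ι R} (hB : Bᵀ = -B) :
    strictLower B - (strictLower B)ᵀ = B := by
  have skew : ∀ i j, B j i = -B i j := fun i j => congrFun₂ hB i j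
  ext i j
  simp only [strictLower, Matrix.sub_apply, transpose_apply, of_apply]
  rcases lt_trichotomy i j with hij | rfl | hji
  · rw [if_neg hij.not_gt, if_pos hij, skew i j, zero_sub, neg_neg]
  · rw [if_neg (lt_irrefl i), sub_zero, self_eq_neg.mp (skew i i)]
  · rw [if_pos hji, if_neg hji.not_gt, sub_zero]

section

variable {n : ℕ} (B : Matrix (Fin n) (Fin n) ℤ)

theorem lbrak_eq_dotProduct_strictLower_mulVec (v w : Fin n → ℝ) :
    lbrak B v w = v ⬝ᵥ (strictLower B).map Int.cast *ᵥ w := by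
  simp only [lbrak, strictLower, dotProduct, mulVec, map_apply, of_apply, Finset.mul_sum]
  refine Finset.sum_congr rfl fun i _ => Finset.sum_congr rfl fun j _ => ?_
  split_ifs
  · ring
  · simp

theorem TDpair_eBφ_eBφ (x y : TDG n) :
    TDpair (eBφ B x) (eBφ B y) = (B.map Int.cast *ᵥ x.1) ⬝ᵥ y.1 + TDpair x y :=
  add_dotProduct (B.map Int.cast *ᵥ x.1) x.2 y.1

theorem braB_eq_sum_vecMul_smul (m : Fin n → ℤ) (c : Fin n → Torus) :
    braB B m c = ∑ j, (m ᵥ* B) j • c j := by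
  simp only [braB, vecMul, dotProduct, Finset.sum_smul, mul_comm (m _)]
  exact Finset.sum_comm

theorem braB_zero (c : Fin n → Torus) : braB B 0 c = 0 := by
  simp [braB]

variable {B}

theorem mulVec_dotProduct_eq_lbrak_sub_lbrak (hB : Bᵀ = -B) (v w : Fin n → ℝ) :
    (B.map Int.cast *ᵥ v) ⬝ᵥ w = lbrak B w v - lbrak B v w := by
  set L : Matrix (Fin n) (Fin n) ℝ := (strictLower B).map Int.cast with hL
  have hBL : B.map Int.cast = L - Lᵀ := by
    rw [hL, ← transpose_map, ← Matrix.map_sub Int.cast Int.cast_sub,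
      strictLower_sub_transpose_strictLower hB]
  calc (B.map Int.cast *ᵥ v) ⬝ᵥ w = w ⬝ᵥ L *ᵥ v - w ⬝ᵥ Lᵀ *ᵥ v := by
        rw [hBL, dotProduct_comm, sub_mulVec, dotProduct_sub]
    _ = w ⬝ᵥ L *ᵥ v - v ⬝ᵥ L *ᵥ w := by
        rw [dotProduct_transpose_mulVec]
    _ = lbrak B w v - lbrak B v w := by
        simp only [lbrak_eq_dotProduct_strictLower_mulVec, hL]

theorem lbrak_add_TDpair (hB : Bᵀ = -B) (x y : TDG n) :
    lbrak B y.1 x.1 + TDpair x y = TDpair (eBφ B x) (eBφ B y) + lbrak B x.1 y.1 := by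
  rw [TDpair_eBφ_eBφ, mulVec_dotProduct_eq_lbrak_sub_lbrak hB]
  ring

theorem fB_leleRf (hB : Bᵀ = -B) (h : TDH n) : fB B (leleRf h) = leleRf (eBf B h) := by
  obtain ⟨⟨m, mhat⟩, s⟩ := h
  refine Prod.ext (funext fun c => ?_) rfl
  calc s + ∑ i, mhat i • c i - braB B m c
      = s + ∑ i, mhat i • c i + ∑ i, (B *ᵥ m) i • c i := by
        simp only [braB_eq_sum_vecMul_smul, vecMul_eq_neg_mulVec_of_transpose_eq_neg hB,
          Pi.neg_apply, neg_smul, Finset.sum_neg_distrib, sub_neg_eq_add]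
    _ = s + ∑ i, (B *ᵥ m + mhat) i • c i := by
        simp only [Pi.add_apply, add_smul, Finset.sum_add_distrib]
        abel

theorem ηB_leleRφ_add_fB_leleRη (hB : Bᵀ = -B) (x y : TDG n) :
    ηB B (leleRφ x) (leleRφ y) + fB B (leleRη x y) =
      leleRη (eBφ B x) (eBφ B y) + leleRf (eBη B x y) := by
  refine Prod.ext (funext fun c => ?_) rfl
  calc (lbrak B y.1 x.1 : Torus) + ((TDpair x y : Torus) - braB B 0 c)
      = ((lbrak B y.1 x.1 + TDpair x y : ℝ) : Torus) := by
        rw [braB_zero, sub_zero, AddCircle.coe_add]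
    _ = ((TDpair (eBφ B x) (eBφ B y) + lbrak B x.1 y.1 : ℝ) : Torus) := by
        rw [lbrak_add_TDpair hB]
    _ = (TDpair (eBφ B x) (eBφ B y) : Torus) +
          ((lbrak B x.1 y.1 : Torus) + ∑ i, (0 : Fin n → ℤ) i • c i) := by
        simp only [AddCircle.coe_add, Pi.zero_apply, zero_smul, Finset.sum_const_zero, add_zero]

end

/-- the left-leg crossed intertwiner `leleR : TD[n] → TBFFR[n]` is
strictly equivariant for the `𝔰𝔬(n,ℤ)`-actions by crossed intertwiners on both
sides; explicitly, for every skew-symmetric integer matrix `B`: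
(i) `id ∘ φ = φ ∘ φ_{e^B}`; (ii) `f_B ∘ f = f ∘ f_{e^B}`;
(iii) `η_B(φ(x₁),φ(x₂)) + f_B(η(x₁,x₂)) = η(φ_{e^B}(x₁),φ_{e^B}(x₂)) + f(η_{e^B}(x₁,x₂))`. -/
theorem leleR_strictly_equivariant (n : ℕ) (hn : 1 ≤ n)
    (B : Matrix (Fin n) (Fin n) ℤ) (hB : Bᵀ = -B) :
    (∀ x : TDG n, leleRφ (eBφ B x) = leleRφ x) ∧
    (∀ h : TDH n, fB B (leleRf h) = leleRf (eBf B h)) ∧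
    (∀ x₁ x₂ : TDG n,
        ηB B (leleRφ x₁) (leleRφ x₂) + fB B (leleRη x₁ x₂) =
          leleRη (eBφ B x₁) (eBφ B x₂) + leleRf (eBη B x₁ x₂)) :=
  ⟨fun _ => rfl, fB_leleRf hB, ηB_leleRφ_add_fB_leleRη hB⟩
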